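/- arXiv:1307.8321 — 6 statements merged into one kernel-verified Lean document; each statement's English description precedes it below -/
import Mathlib

section
/- Let n, m be positive integers with m ≥ 2 and let f : 𝔻^n → 𝔹_m be a holomorphic mapping. If z = (z_1,…,z_n) ∈ 𝔻^n is a point with f(z) ≠ 0, then ∑_{j=1}^n (1 − |z_j|²) · |⟨f'_{z_j}(z), f(z)⟩| / |f(z)| ≤ 1 − |f(z)|². -/
open scoped InnerProductSpace

/-!
The proof reduces to the classical Schwarz–Pick lemma on the unit disc. For unimodular constants
`c j`, the analytic disc `γ w = ((z j + c j w) / (1 + conj (z j) c j w))_j` maps the unit disc into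
the polydisk, with `γ 0 = z` and `γ' 0 = ((1 - |z j|²) c j)_j`. The function
`h w = ⟪f z, f (γ w)⟫ / |f z|` maps the unit disc into itself by Cauchy–Schwarz, `h 0 = |f z|`, and
`h' 0 = ∑ j, (1 - |z j|²) c j ⟪f z, f'_{z_j} z⟫ / |f z|`. Choosing each `c j` so that
`c j ⟪f z, f'_{z_j} z⟫` is its own modulus turns `|h' 0| ≤ 1 - |h 0|²`
(`schwarz_pick_disc_zero`) into the claim.
-/

open Metric ComplexConjugate

theorem one_add_conj_mul_ne_zero {a w : ℂ} (ha : ‖a‖ < 1) (hw : ‖w‖ < 1) :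
    1 + conj a * w ≠ 0 := by
  intro h
  have h1 : conj a * w = -1 := by linear_combination h
  have h2 : ‖a‖ * ‖w‖ = 1 := by
    have := congrArg norm h1
    simpa using this
  nlinarith [norm_nonneg a, norm_nonneg w]

/-- The disc automorphism `w ↦ (a + w) / (1 + conj a * w)` maps the unit disc into itself, by
`|1 + conj a * w|² - |a + w|² = (1 - |a|²) (1 - |w|²)`. -/
theorem norm_mobius_lt_one {a w : ℂ} (ha : ‖a‖ < 1) (hw : ‖w‖ < 1) :
    ‖(a + w) / (1 + conj a * w)‖ < 1 := by
  have hne := one_add_conj_mul_ne_zero ha hw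
  rw [norm_div, div_lt_one (norm_pos_iff.mpr hne)]
  have key : ‖1 + conj a * w‖ ^ 2 - ‖a + w‖ ^ 2 = (1 - ‖a‖ ^ 2) * (1 - ‖w‖ ^ 2) := by
    simp only [← Complex.normSq_eq_norm_sq, Complex.normSq_apply, Complex.add_re, Complex.add_im,
      Complex.mul_re, Complex.mul_im, Complex.conj_re, Complex.conj_im, Complex.one_re,
      Complex.one_im]
    ring
  have h1 : 0 < (1 - ‖a‖ ^ 2) * (1 - ‖w‖ ^ 2) := by
    apply mul_pos <;> nlinarith [norm_nonneg a, norm_nonneg w]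
  exact lt_of_pow_lt_pow_left₀ 2 (norm_nonneg _) (by linarith)

theorem hasDerivAt_mobius {a c w : ℂ} (h : 1 + conj a * (c * w) ≠ 0) :
    HasDerivAt (fun w : ℂ => (a + c * w) / (1 + conj a * (c * w)))
      ((c * (1 + conj a * (c * w)) - (a + c * w) * (conj a * c)) / (1 + conj a * (c * w)) ^ 2)
      w := by
  have hid : HasDerivAt (fun w : ℂ => c * w) c w := by
    simpa using (hasDerivAt_id w).const_mul c
  exact (hid.const_add a).div ((hid.const_mul (conj a)).const_add 1) h

/-- The Schwarz–Pick inequality at the origin for self-maps of the unit disc: compose with the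
automorphism of the disc that sends `h 0` to `0` and apply the Schwarz lemma. -/
theorem schwarz_pick_disc_zero {h : ℂ → ℂ} {h' : ℂ}
    (hd : DifferentiableOn ℂ h (ball 0 1)) (hb : ∀ w ∈ ball (0 : ℂ) 1, ‖h w‖ < 1)
    (hh : HasDerivAt h h' 0) : ‖h'‖ ≤ 1 - ‖h 0‖ ^ 2 := by
  have h0 : ‖-h 0‖ < 1 := by simpa using hb 0 (by simp)
  set T : ℂ → ℂ := fun w => (-h 0 + 1 * w) / (1 + conj (-h 0) * (1 * w)) with hT
  have hTd : ∀ w, ‖w‖ < 1 → HasDerivAt T _ w := fun w hw =>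
    hasDerivAt_mobius (by simpa using one_add_conj_mul_ne_zero h0 hw)
  have hpos : 0 < 1 - ‖h 0‖ ^ 2 := by
    rw [norm_neg] at h0; nlinarith [norm_nonneg (h 0)]
  have hcomp : HasDerivAt (T ∘ h) _ 0 := (hTd (h 0) (by simpa using h0)).comp 0 hh
  have hle := Complex.norm_deriv_le_one_of_mapsTo_ball (f := T ∘ h) (c := 0) (R := 1)
    (fun w hw => ((hTd _ (hb w hw)).differentiableAt.comp w
      (hd.differentiableAt (isOpen_ball.mem_nhds hw))).differentiableWithinAt)
    (fun w hw => by
      have := norm_mobius_lt_one h0 (hb w hw)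
      simpa [hT] using this.le)
    one_pos
  rw [hcomp.deriv] at hle
  have hden : (1 : ℂ) + conj (-h 0) * (1 * h 0) = ((1 - ‖h 0‖ ^ 2 : ℝ) : ℂ) := by
    push_cast
    rw [← Complex.conj_mul', map_neg]; ring
  have hnum : -h 0 + 1 * h 0 = 0 := by ring
  rw [hden, hnum, zero_mul, sub_zero, one_mul, norm_mul, norm_div, norm_pow, Complex.norm_real,
    Real.norm_of_nonneg hpos.le] at hle
  have : ‖h'‖ / (1 - ‖h 0‖ ^ 2) ≤ 1 := by
    convert hle using 1
    field_simp
  rwa [div_le_one hpos] at this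

/-- **Schwarz–Pick lemma on the polydisk, case `f z ≠ 0`** (Theorem 1, inequality (1.8)).
If `f : 𝔻ⁿ → 𝔹_m` is holomorphic with `m ≥ 2` and `f z ≠ 0`, then
`∑ j (1 - |z_j|²)·|⟨f'_{z_j}(z), f(z)⟩|/|f(z)| ≤ 1 - |f(z)|²`. -/
theorem schwarz_pick_polydisk_nonzero
    (n m : ℕ) (hn : 0 < n) (hm : 2 ≤ m)
    (f : EuclideanSpace ℂ (Fin n) → EuclideanSpace ℂ (Fin m))
    (hf : DifferentiableOn ℂ f {z : EuclideanSpace ℂ (Fin n) | ∀ j, ‖z j‖ < 1})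
    (hfb : ∀ z : EuclideanSpace ℂ (Fin n), (∀ j, ‖z j‖ < 1) → ‖f z‖ < 1)
    (z : EuclideanSpace ℂ (Fin n)) (hz : ∀ j, ‖z j‖ < 1) (hfz : f z ≠ 0) :
    ∑ j : Fin n, (1 - ‖z j‖ ^ 2) *
        (‖⟪fderiv ℂ f z (EuclideanSpace.single j 1), f z⟫_ℂ‖ / ‖f z‖)
      ≤ 1 - ‖f z‖ ^ 2 := by
  have hopen : IsOpen {z : EuclideanSpace ℂ (Fin n) | ∀ j, ‖z j‖ < 1} := by
    simp only [Set.ofPred_forall]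
    exact isOpen_iInter_of_finite fun j => isOpen_lt (by fun_prop) continuous_const
  have hfpos : 0 < ‖f z‖ := norm_pos_iff.mpr hfz
  -- The phases `c j` make every term of the derivative of the slice function nonnegative.
  choose c hc1 hc using fun j : Fin n =>
    RCLike.exists_norm_eq_mul_self ⟪f z, fderiv ℂ f z (EuclideanSpace.single j 1)⟫_ℂ
  -- An analytic disc through `z`, built from an automorphism of the disc in each coordinate.
  set γ : ℂ → EuclideanSpace ℂ (Fin n) := fun w =>
    WithLp.toLp 2 fun j => (z j + c j * w) / (1 + conj (z j) * (c j * w)) with hγ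
  have hcw : ∀ j, ∀ w ∈ ball (0 : ℂ) 1, ‖c j * w‖ < 1 := fun j w hw => by
    simpa [hc1 j] using hw
  have hγmem : ∀ w ∈ ball (0 : ℂ) 1, ∀ j, ‖γ w j‖ < 1 := fun w hw j =>
    norm_mobius_lt_one (hz j) (hcw j w hw)
  have hγ0 : γ 0 = z := by ext j; simp [hγ]
  have hγd : ∀ w ∈ ball (0 : ℂ) 1, HasDerivAt γ (WithLp.toLp 2 fun j =>
      (c j * (1 + conj (z j) * (c j * w)) - (z j + c j * w) * (conj (z j) * c j)) /
        (1 + conj (z j) * (c j * w)) ^ 2) w := fun w hw =>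
    ((PiLp.continuousLinearEquiv 2 ℂ (fun _ : Fin n => ℂ)).symm.hasFDerivAt).comp_hasDerivAt w
      (hasDerivAt_pi.mpr fun j =>
        hasDerivAt_mobius (one_add_conj_mul_ne_zero (hz j) (hcw j w hw)))
  have hfd : ∀ w ∈ ball (0 : ℂ) 1, HasFDerivAt f (fderiv ℂ f (γ w)) (γ w) := fun w hw =>
    (hf.differentiableAt (hopen.mem_nhds (hγmem w hw))).hasFDerivAt
  -- The slice function: the component of `f ∘ γ` in the direction of `f z`.
  set h : ℂ → ℂ := fun w => ⟪f z, f (γ w)⟫_ℂ / ‖f z‖ with hh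
  have hhd : ∀ w (hw : w ∈ ball (0 : ℂ) 1), HasDerivAt h _ w := fun w hw =>
    (((innerSL ℂ (f z)).hasFDerivAt).comp_hasDerivAt w
      ((hfd w hw).comp_hasDerivAt w (hγd w hw))).div_const (‖f z‖ : ℂ)
  have hhb : ∀ w ∈ ball (0 : ℂ) 1, ‖h w‖ < 1 := fun w hw => by
    rw [hh]
    simp only [norm_div, Complex.norm_real, norm_norm]
    rw [div_lt_one hfpos]
    calc ‖⟪f z, f (γ w)⟫_ℂ‖ ≤ ‖f z‖ * ‖f (γ w)‖ := norm_inner_le_norm _ _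
      _ < ‖f z‖ := mul_lt_of_lt_one_right hfpos (hfb _ (hγmem w hw))
  have key := schwarz_pick_disc_zero
    (fun w hw => (hhd w hw).differentiableAt.differentiableWithinAt) hhb (hhd 0 (by simp))
  have h0 : ‖h 0‖ = ‖f z‖ := by
    simp only [hh, hγ0, inner_self_eq_norm_sq_to_K]
    simp [pow_two, hfpos.ne']
  have hvec : (WithLp.toLp 2 fun j =>
      (c j * (1 + conj (z j) * (c j * 0)) - (z j + c j * 0) * (conj (z j) * c j)) /
        (1 + conj (z j) * (c j * 0)) ^ 2 : EuclideanSpace ℂ (Fin n)) =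
      ∑ j, (((1 - ‖z j‖ ^ 2 : ℝ) : ℂ) * c j) • EuclideanSpace.single j (1 : ℂ) := by
    ext i
    simp [Finset.sum_apply, Pi.single_apply]
    rw [← Complex.mul_conj']
    ring
  rw [h0, hγ0, hvec] at key
  refine (le_abs_self _).trans (le_of_eq_of_le ?_ key)
  rw [← Real.norm_eq_abs, ← Complex.norm_real]
  congr 1
  simp only [map_sum, map_smul, innerSL_apply_apply, smul_eq_mul, Finset.sum_div]
  push_cast
  refine Finset.sum_congr rfl fun j _ => ?_
  rw [norm_inner_symm]
  have := hc j
  simp only [Complex.coe_algebraMap] at this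
  rw [this]
  ring
end

section
/- Let n, m be positive integers with m ≥ 2 and let f : 𝔻^n → 𝔹_m be a holomorphic mapping. If z = (z_1,…,z_n) ∈ 𝔻^n is a point with f(z) = 0, then ∑_{j=1}^n (1 − |z_j|²)² · |f'_{z_j}(z)|² ≤ 1. -/
/-!
Fix unimodular `ε_j` and consider the analytic disk `γ(t)_j = (ε_j t + z_j) / (1 + conj z_j ε_j t)`
in the polydisk, which passes through `z` at `t = 0` with velocity `γ'(0)_j = (1 - |z_j|²) ε_j`.
The one-variable Schwarz lemma applied to `f ∘ γ` gives `|∑ ε_j v_j| ≤ 1`, where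
`v_j = (1 - |z_j|²) f'_{z_j}(z)` (`norm_sum_smul_fderiv_le_one`). In an inner product space, signs
`ε_j = ±1` can be chosen so that `∑ |v_j|² ≤ |∑ ε_j v_j|²` (`exists_sign_sum_sq_le`).
-/

open ComplexConjugate in
lemma norm_moebius_lt_one {a w : ℂ} (ha : ‖a‖ < 1) (hw : ‖w‖ < 1) :
    1 + conj a * w ≠ 0 ∧ ‖(w + a) / (1 + conj a * w)‖ < 1 := by
  have hne : 1 + conj a * w ≠ 0 := by
    intro h
    have h1 : conj a * w = -1 := by linear_combination h
    have h2 : ‖a‖ * ‖w‖ = 1 := by simpa using congrArg norm h1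
    nlinarith [norm_nonneg a, norm_nonneg w]
  refine ⟨hne, ?_⟩
  rw [norm_div, div_lt_one (norm_pos_iff.2 hne)]
  have key : ‖1 + conj a * w‖ ^ 2 - ‖w + a‖ ^ 2 = (1 - ‖a‖ ^ 2) * (1 - ‖w‖ ^ 2) := by
    simp only [Complex.sq_norm, Complex.normSq_apply, Complex.add_re, Complex.add_im,
      Complex.mul_re, Complex.mul_im, Complex.conj_re, Complex.conj_im, Complex.one_re,
      Complex.one_im]
    ring
  have hpos : 0 < (1 - ‖a‖ ^ 2) * (1 - ‖w‖ ^ 2) := by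
    apply mul_pos <;> nlinarith [norm_nonneg a, norm_nonneg w]
  exact lt_of_pow_lt_pow_left₀ 2 (norm_nonneg _) (by linarith)

/-- Each new sign is chosen so that the real part of the inner product of the new term with the
partial sum is nonnegative. -/
lemma exists_sign_sum_sq_le {ι E : Type*} [NormedAddCommGroup E] [InnerProductSpace ℂ E]
    (s : Finset ι) (v : ι → E) :
    ∃ ε : ι → ℂ, (∀ j, ‖ε j‖ = 1) ∧ ∑ j ∈ s, ‖v j‖ ^ 2 ≤ ‖∑ j ∈ s, ε j • v j‖ ^ 2 := by
  classical
  induction s using Finset.induction_on with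
  | empty => exact ⟨fun _ => 1, by simp, by simp⟩
  | insert a s has ih =>
    obtain ⟨ε, hε, hle⟩ := ih
    set S := ∑ j ∈ s, ε j • v j with hS
    obtain ⟨c, hc, hcS⟩ : ∃ c : ℂ, ‖c‖ = 1 ∧ ‖v a‖ ^ 2 + ‖S‖ ^ 2 ≤ ‖c • v a + S‖ ^ 2 := by
      rcases le_total 0 (RCLike.re (inner ℂ (v a) S)) with h | h
      · refine ⟨1, by simp, ?_⟩
        rw [one_smul, norm_add_sq (𝕜 := ℂ)]
        linarith
      · refine ⟨-1, by simp, ?_⟩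
        rw [neg_one_smul, norm_add_sq (𝕜 := ℂ), inner_neg_left, map_neg, norm_neg]
        linarith
    refine ⟨Function.update ε a c, fun j => ?_, ?_⟩
    · by_cases hj : j = a
      · subst hj; simpa using hc
      · simpa [hj] using hε j
    · have hsum : ∑ j ∈ s, Function.update ε a c j • v j = S :=
        Finset.sum_congr rfl fun j hj => by
          rw [Function.update_of_ne (ne_of_mem_of_not_mem hj has)]
      rw [Finset.sum_insert has, Finset.sum_insert has, hsum, Function.update_self]
      linarith

open ComplexConjugate in
/-- The Schwarz lemma along the analytic disk through `z` whose coordinates are Möbius maps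
precomposed with the rotations `ε j`. -/
lemma norm_sum_smul_fderiv_le_one {n : ℕ} {E : Type*} [NormedAddCommGroup E] [NormedSpace ℂ E]
    (f : EuclideanSpace ℂ (Fin n) → E)
    (hf : DifferentiableOn ℂ f {z : EuclideanSpace ℂ (Fin n) | ∀ j, ‖z j‖ < 1})
    (hfb : ∀ z : EuclideanSpace ℂ (Fin n), (∀ j, ‖z j‖ < 1) → ‖f z‖ < 1)
    (z : EuclideanSpace ℂ (Fin n)) (hz : ∀ j, ‖z j‖ < 1) (hfz : f z = 0)
    (ε : Fin n → ℂ) (hε : ∀ j, ‖ε j‖ = 1) :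
    ‖∑ j, ε j • (((1 - ‖z j‖ ^ 2 : ℝ) : ℂ) • fderiv ℂ f z (EuclideanSpace.single j 1))‖ ≤ 1 := by
  let φ : Fin n → ℂ → ℂ := fun j t => (ε j * t + z j) / (1 + conj (z j) * (ε j * t))
  let γ : ℂ → EuclideanSpace ℂ (Fin n) := fun t => ∑ j, φ j t • EuclideanSpace.single j (1 : ℂ)
  have hopen : IsOpen {z : EuclideanSpace ℂ (Fin n) | ∀ j, ‖z j‖ < 1} := by
    simp only [Set.ofPred_forall]
    exact isOpen_iInter_of_finite fun j => isOpen_lt (by fun_prop) continuous_const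
  have hγ_apply : ∀ t i, γ t i = φ i t := by
    intro t i
    simp [γ, Pi.single_apply]
  have hεt : ∀ j t, ‖t‖ < 1 → ‖ε j * t‖ < 1 := by
    intro j t ht
    simpa [hε j] using ht
  have hγ_mem : ∀ t, ‖t‖ < 1 → ∀ i, ‖γ t i‖ < 1 := by
    intro t ht i
    rw [hγ_apply]
    exact (norm_moebius_lt_one (hz i) (hεt i t ht)).2
  have hγ0 : γ 0 = z := by
    ext i
    rw [hγ_apply]
    simp [φ]
  have hφd : ∀ j t, ‖t‖ < 1 → DifferentiableAt ℂ (φ j) t := by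
    intro j t ht
    exact DifferentiableAt.div (by fun_prop) (by fun_prop)
      (norm_moebius_lt_one (hz j) (hεt j t ht)).1
  have hφ0 : ∀ j, HasDerivAt (φ j) (ε j * ((1 - ‖z j‖ ^ 2 : ℝ) : ℂ)) 0 := by
    intro j
    have h1 : HasDerivAt (fun t : ℂ => ε j * t + z j) (ε j) 0 := by
      simpa using ((hasDerivAt_id (0 : ℂ)).const_mul (ε j)).add_const (z j)
    have h2 : HasDerivAt (fun t : ℂ => 1 + conj (z j) * (ε j * t)) (conj (z j) * ε j) 0 := by
      simpa using (((hasDerivAt_id (0 : ℂ)).const_mul (ε j)).const_mul (conj (z j))).const_add 1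
    refine (h1.div h2 (by simp)).congr_deriv ?_
    have h3 : conj (z j) * z j = (‖z j‖ : ℂ) ^ 2 := Complex.conj_mul' (z j)
    push_cast
    rw [← h3]
    simp
    ring
  have hγ' : HasDerivAt γ
      (∑ j, (ε j * ((1 - ‖z j‖ ^ 2 : ℝ) : ℂ)) • EuclideanSpace.single j (1 : ℂ)) 0 :=
    HasDerivAt.fun_sum fun j _ => (hφ0 j).smul_const _
  have hfd : HasFDerivAt f (fderiv ℂ f z) (γ 0) := by
    rw [hγ0]
    exact (hf.differentiableAt (hopen.mem_nhds hz)).hasFDerivAt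
  have hcomp := hfd.comp_hasDerivAt 0 hγ'
  have hdiff : DifferentiableOn ℂ (f ∘ γ) (Metric.ball 0 1) := by
    refine hf.comp (fun t ht => ?_) fun t ht => hγ_mem t (by simpa using ht)
    exact (DifferentiableAt.fun_sum fun j _ =>
      (hφd j t (by simpa using ht)).smul_const _).differentiableWithinAt
  have hmaps : Set.MapsTo (f ∘ γ) (Metric.ball 0 1) (Metric.closedBall ((f ∘ γ) 0) 1) := by
    intro t ht
    have := hfb (γ t) (hγ_mem t (by simpa using ht))
    simpa [hγ0, hfz] using this.le
  have hS := Complex.norm_deriv_le_div_of_mapsTo_ball hdiff hmaps one_pos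
  rw [hcomp.deriv, map_sum] at hS
  simpa only [map_smul, mul_smul, div_one] using hS


/-- **Schwarz–Pick lemma on the polydisk, case `f z = 0`** (Theorem 1, inequality (1.9)).
If `f : 𝔻ⁿ → 𝔹_m` is holomorphic with `m ≥ 2` and `f z = 0`, then
`∑ j (1 - |z_j|²)²·|f'_{z_j}(z)|² ≤ 1`. -/
theorem schwarz_pick_polydisk_zero
    (n m : ℕ) (hn : 0 < n) (hm : 2 ≤ m)
    (f : EuclideanSpace ℂ (Fin n) → EuclideanSpace ℂ (Fin m))
    (hf : DifferentiableOn ℂ f {z : EuclideanSpace ℂ (Fin n) | ∀ j, ‖z j‖ < 1})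
    (hfb : ∀ z : EuclideanSpace ℂ (Fin n), (∀ j, ‖z j‖ < 1) → ‖f z‖ < 1)
    (z : EuclideanSpace ℂ (Fin n)) (hz : ∀ j, ‖z j‖ < 1) (hfz : f z = 0) :
    ∑ j : Fin n, (1 - ‖z j‖ ^ 2) ^ 2 *
        ‖fderiv ℂ f z (EuclideanSpace.single j 1)‖ ^ 2 ≤ 1 := by
  obtain ⟨ε, hε, hle⟩ := exists_sign_sum_sq_le Finset.univ fun j =>
    ((1 - ‖z j‖ ^ 2 : ℝ) : ℂ) • fderiv ℂ f z (EuclideanSpace.single j 1)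
  have h1 := norm_sum_smul_fderiv_le_one f hf hfb z hz hfz ε hε
  calc _ = ∑ j, ‖((1 - ‖z j‖ ^ 2 : ℝ) : ℂ) • fderiv ℂ f z (EuclideanSpace.single j 1)‖ ^ 2 := by
        refine Finset.sum_congr rfl fun j _ => ?_
        rw [norm_smul, Complex.norm_real, mul_pow, Real.norm_eq_abs, sq_abs]
    _ ≤ _ := hle
    _ ≤ 1 := pow_le_one₀ (norm_nonneg _) h1
end

section
/- Let f : 𝔻^n → 𝔹_m be a holomorphic mapping with f(0) ≠ 0. Then ∑_{j=1}^n |⟨f'_{z_j}(0), f(0)/|f(0)|⟩| ≤ 1 − |f(0)|². -/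
/-!
The inequality reduces to the one-variable Schwarz–Pick inequality at the origin. Put
`e = f 0 / ‖f 0‖`, a unit vector, and choose unimodular constants `c j` with
`c j * ⟪e, ∂_j f 0⟫ = |⟪e, ∂_j f 0⟫|`. The function `g w = ⟪e, f (w c₁, …, w cₙ)⟫` maps the unit disc
to itself, `g 0 = ‖f 0‖`, and by the chain rule `g' 0` is exactly the sum to be bounded, so
`|g' 0| ≤ 1 - |g 0|²` (`norm_deriv_zero_le_one_sub_sq`) is the claim.
-/

open scoped InnerProductSpace

/-- The one-variable Schwarz–Pick inequality at the origin when `g 0 = r` is real; the Schwarz lemma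
applied to the composite of `g` with the disc automorphism `u ↦ (u - r) / (1 - r u)`. -/
lemma norm_deriv_zero_le_one_sub_sq {g : ℂ → ℂ} {g' : ℂ} {r : ℝ}
    (hg : DifferentiableOn ℂ g (Metric.ball 0 1))
    (hb : ∀ w ∈ Metric.ball (0 : ℂ) 1, ‖g w‖ < 1)
    (h0 : g 0 = r) (hd : HasDerivAt g g' 0) :
    ‖g'‖ ≤ 1 - r ^ 2 := by
  have hr : |r| < 1 := by
    have := hb 0 (by simp)
    rwa [h0, Complex.norm_real, Real.norm_eq_abs] at this
  have hr2 : 0 < 1 - r ^ 2 := by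
    have := (sq_lt_one_iff_abs_lt_one r).2 hr
    linarith
  have hne : ∀ u : ℂ, ‖u‖ < 1 → 1 - (r : ℂ) * u ≠ 0 := by
    intro u hu h
    have h1 : (r : ℂ) * u = 1 := (sub_eq_zero.1 h).symm
    have h2 : |r| * ‖u‖ = 1 := by
      rw [← Real.norm_eq_abs, ← Complex.norm_real, ← norm_mul, h1, norm_one]
    nlinarith [abs_nonneg r, norm_nonneg u]
  have hdiff : DifferentiableOn ℂ (fun w => (g w - r) / (1 - r * g w)) (Metric.ball 0 1) :=
    (hg.sub_const _).div ((hg.const_mul _).const_sub _) fun w hw => hne _ (hb w hw)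
  have hmaps : Set.MapsTo (fun w => (g w - r) / (1 - r * g w)) (Metric.ball 0 1)
      (Metric.closedBall ((g 0 - r) / (1 - r * g 0)) 1) := by
    intro w hw
    have hu := hb w hw
    simp only [h0, sub_self, zero_div, mem_closedBall_zero_iff, norm_div]
    rw [div_le_one (norm_pos_iff.2 (hne _ hu))]
    refine (sq_le_sq₀ (norm_nonneg _) (norm_nonneg _)).1 ?_
    have hu2 : ‖g w‖ ^ 2 < 1 := by nlinarith [norm_nonneg (g w)]
    simp only [← Complex.normSq_eq_norm_sq, Complex.normSq_apply] at hu2 ⊢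
    simp only [Complex.sub_re, Complex.sub_im, Complex.mul_re, Complex.mul_im, Complex.one_re,
      Complex.one_im, Complex.ofReal_re, Complex.ofReal_im]
    -- the difference of the two sides is `(1 - r²) (1 - |g w|²)`
    nlinarith [mul_pos hr2 (sub_pos.2 hu2)]
  have hder : HasDerivAt (fun w => (g w - r) / (1 - r * g w)) (g' / (1 - r ^ 2)) 0 := by
    have hne0 := hne (g 0) (hb 0 (by simp))
    refine ((hd.sub_const (r : ℂ)).div ((hd.const_mul (r : ℂ)).const_sub 1) hne0).congr_deriv ?_
    rw [h0] at hne0 ⊢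
    have : (1 : ℂ) - r ^ 2 ≠ 0 := by rwa [pow_two]
    field_simp
    ring
  have key := Complex.norm_deriv_le_div_of_mapsTo_ball hdiff hmaps one_pos
  rw [hder.deriv, norm_div, div_one] at key
  have hn : ‖(1 : ℂ) - r ^ 2‖ = 1 - r ^ 2 := by
    have : ((1 : ℂ) - r ^ 2) = ((1 - r ^ 2 : ℝ) : ℂ) := by push_cast; rfl
    rw [this, Complex.norm_real, Real.norm_of_nonneg hr2.le]
  rwa [hn, div_le_one hr2] at key

/-- **Schwarz–Pick inequality at the origin, case `f 0 ≠ 0`** (inequality (3.3)).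
If `f : 𝔻ⁿ → 𝔹_m` is holomorphic and `f 0 ≠ 0`, then
`∑ j |⟨f'_{z_j}(0), f(0)/|f(0)|⟩| ≤ 1 - |f(0)|²`. -/
theorem schwarz_pick_polydisk_origin_nonzero
    (n m : ℕ)
    (f : EuclideanSpace ℂ (Fin n) → EuclideanSpace ℂ (Fin m))
    (hf : DifferentiableOn ℂ f {z : EuclideanSpace ℂ (Fin n) | ∀ j, ‖z j‖ < 1})
    (hfb : ∀ z : EuclideanSpace ℂ (Fin n), (∀ j, ‖z j‖ < 1) → ‖f z‖ < 1)
    (hf0 : f 0 ≠ 0) :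
    ∑ j : Fin n,
        ‖⟪fderiv ℂ f 0 (EuclideanSpace.single j 1), (‖f 0‖ : ℂ)⁻¹ • f 0⟫_ℂ‖
      ≤ 1 - ‖f 0‖ ^ 2 := by
  have hn0 : (‖f 0‖ : ℂ) ≠ 0 := by simpa using hf0
  set e : EuclideanSpace ℂ (Fin m) := (‖f 0‖ : ℂ)⁻¹ • f 0 with he
  have hnorm : ‖e‖ = 1 := by
    rw [he, norm_smul, norm_inv, Complex.norm_real, norm_norm, inv_mul_cancel₀]
    simpa using hf0
  have hopen : IsOpen {z : EuclideanSpace ℂ (Fin n) | ∀ j, ‖z j‖ < 1} := by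
    simp only [Set.ofPred_forall]
    exact isOpen_iInter_of_finite fun j => isOpen_lt (by fun_prop) continuous_const
  choose c hc1 hc using fun j : Fin n =>
    RCLike.exists_norm_eq_mul_self (⟪e, fderiv ℂ f 0 (EuclideanSpace.single j 1)⟫_ℂ)
  set v : EuclideanSpace ℂ (Fin n) := WithLp.toLp 2 c with hv
  have hmem : ∀ w ∈ Metric.ball (0 : ℂ) 1, ∀ j, ‖(w • v) j‖ < 1 := by
    intro w hw j
    simpa [hv, hc1] using hw
  have hfd : HasFDerivAt f (fderiv ℂ f 0) ((0 : ℂ) • v) := by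
    rw [zero_smul]
    exact (hf.differentiableAt (hopen.mem_nhds (by simp))).hasFDerivAt
  have hline : ∀ w : ℂ, HasDerivAt (fun w : ℂ => w • v) v w := fun w => by
    simpa using (hasDerivAt_id w).smul_const v
  have hder : HasDerivAt (fun w : ℂ => ⟪e, f (w • v)⟫_ℂ) ⟪e, fderiv ℂ f 0 v⟫_ℂ 0 :=
    (innerSL ℂ e).hasFDerivAt.comp_hasDerivAt 0 (hfd.comp_hasDerivAt 0 (hline 0))
  have hsum : ⟪e, fderiv ℂ f 0 v⟫_ℂ =
      ((∑ j, ‖⟪fderiv ℂ f 0 (EuclideanSpace.single j 1), e⟫_ℂ‖ : ℝ) : ℂ) := by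
    have hvs : v = ∑ j, c j • EuclideanSpace.single j (1 : ℂ) := by
      ext i
      simp [hv, Pi.single_apply]
    rw [hvs, map_sum, inner_sum, Complex.ofReal_sum]
    refine Finset.sum_congr rfl fun j _ => ?_
    rw [map_smul, inner_smul_right, norm_inner_symm]
    exact (hc j).symm
  have key := norm_deriv_zero_le_one_sub_sq (r := ‖f 0‖) ?_ ?_ ?_ hder
  · rwa [hsum, Complex.norm_real, Real.norm_of_nonneg (by positivity)] at key
  · exact (innerSL ℂ e).differentiable.comp_differentiableOn
      (hf.comp (fun w _ => (hline w).differentiableAt.differentiableWithinAt) hmem)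
  · intro w hw
    calc ‖⟪e, f (w • v)⟫_ℂ‖ ≤ ‖e‖ * ‖f (w • v)‖ := norm_inner_le_norm _ _
      _ < 1 := by rw [hnorm, one_mul]; exact hfb _ (hmem w hw)
  · simp only [zero_smul]
    rw [he, inner_smul_left, inner_self_eq_norm_sq_to_K]
    simp
    field_simp
end

section
/- Let f : 𝔻^n → 𝔹_m be a holomorphic mapping with f(0) = 0. Then ∑_{j=1}^n |f'_{z_j}(0)|² ≤ 1. -/
/-!
Write `a j = f'_{z_j}(0)`. For a vector `ε` of signs, `t ↦ f (t ε)` maps the unit disk into the unit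
ball and fixes the origin, so the one-variable Schwarz lemma gives `‖∑ j, ε j • a j‖ ≤ 1`.
By the parallelogram law the signs can be chosen one at a time so that
`∑ j, ‖a j‖ ^ 2 ≤ ‖∑ j, ε j • a j‖ ^ 2` (`exists_signs_sum_sq_le`), and the claim follows.
-/

/-- Greedy choice of signs: by the parallelogram law, one of `x + a`, `x - a` has squared norm at
least `‖x‖ ^ 2 + ‖a‖ ^ 2`. Only `‖ε j‖ = 1` is recorded, which suffices for the Schwarz lemma. -/
lemma exists_signs_sum_sq_le {ι E : Type*} [NormedAddCommGroup E] [InnerProductSpace ℂ E]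
    (a : ι → E) (s : Finset ι) :
    ∃ ε : ι → ℂ, (∀ j, ‖ε j‖ = 1) ∧ ∑ j ∈ s, ‖a j‖ ^ 2 ≤ ‖∑ j ∈ s, ε j • a j‖ ^ 2 := by
  classical
  induction s using Finset.induction_on with
  | empty => exact ⟨fun _ => 1, by simp, by simp⟩
  | insert i s hi ih =>
    obtain ⟨ε, hε, h⟩ := ih
    have key (c : ℂ) : ∑ j ∈ insert i s, Function.update ε i c j • a j
        = c • a i + ∑ j ∈ s, ε j • a j := by
      rw [Finset.sum_insert hi, Function.update_self]
      congr 1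
      refine Finset.sum_congr rfl fun j hj => ?_
      rw [Function.update_of_ne (ne_of_mem_of_not_mem hj hi)]
    have hnorm (c : ℂ) (hc : ‖c‖ = 1) (j : ι) : ‖Function.update ε i c j‖ = 1 := by
      by_cases hj : j = i
      · subst hj; simpa using hc
      · simpa [hj] using hε j
    have hp := parallelogram_law_with_norm ℂ (∑ j ∈ s, ε j • a j) (a i)
    by_cases hle : ‖(∑ j ∈ s, ε j • a j) - a i‖ ^ 2 ≤ ‖(∑ j ∈ s, ε j • a j) + a i‖ ^ 2
    · refine ⟨Function.update ε i 1, hnorm 1 (by simp), ?_⟩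
      rw [key, Finset.sum_insert hi, one_smul, add_comm (a i)]
      nlinarith
    · refine ⟨Function.update ε i (-1), hnorm (-1) (by simp), ?_⟩
      rw [key, Finset.sum_insert hi, neg_one_smul, neg_add_eq_sub]
      nlinarith

/-- **Schwarz inequality at the origin, case `f 0 = 0`** (inequality (3.4)).
If `f : 𝔻ⁿ → 𝔹_m` is holomorphic and `f 0 = 0`, then `∑ j |f'_{z_j}(0)|² ≤ 1`. -/
theorem schwarz_pick_polydisk_origin_zero
    (n m : ℕ)
    (f : EuclideanSpace ℂ (Fin n) → EuclideanSpace ℂ (Fin m))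
    (hf : DifferentiableOn ℂ f {z : EuclideanSpace ℂ (Fin n) | ∀ j, ‖z j‖ < 1})
    (hfb : ∀ z : EuclideanSpace ℂ (Fin n), (∀ j, ‖z j‖ < 1) → ‖f z‖ < 1)
    (hf0 : f 0 = 0) :
    ∑ j : Fin n, ‖fderiv ℂ f 0 (EuclideanSpace.single j 1)‖ ^ 2 ≤ 1 := by
  obtain ⟨ε, hε, h⟩ := exists_signs_sum_sq_le
    (fun j : Fin n => fderiv ℂ f 0 (EuclideanSpace.single j 1)) Finset.univ
  refine h.trans ?_
  set v : EuclideanSpace ℂ (Fin n) := WithLp.toLp 2 ε with hv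
  have hsum : ∑ j, ε j • fderiv ℂ f 0 (EuclideanSpace.single j 1) = fderiv ℂ f 0 v := by
    simp_rw [← map_smul, ← map_sum]
    congr 1
    ext k
    simp [hv, Pi.single_apply]
  have hopen : IsOpen {z : EuclideanSpace ℂ (Fin n) | ∀ j, ‖z j‖ < 1} := by
    simp only [Set.ofPred_forall]
    exact isOpen_iInter_of_finite fun j => isOpen_lt (by fun_prop) continuous_const
  have hmem (t : ℂ) (ht : t ∈ Metric.ball (0 : ℂ) 1) (j : Fin n) : ‖(t • v) j‖ < 1 := by
    simpa [hv, hε] using ht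
  have hdf : DifferentiableAt ℂ f 0 :=
    hf.differentiableAt (hopen.mem_nhds (by simp))
  have hd : DifferentiableOn ℂ (fun t : ℂ => f (t • v)) (Metric.ball 0 1) :=
    hf.comp (by fun_prop) fun t ht => hmem t ht
  have hmaps : Set.MapsTo (fun t : ℂ => f (t • v)) (Metric.ball 0 1) (Metric.ball 0 1) := by
    intro t ht
    simpa using hfb _ (hmem t ht)
  have hderiv : HasDerivAt (fun t : ℂ => f (t • v)) (fderiv ℂ f 0 v) 0 := by
    have h1 : HasDerivAt (fun t : ℂ => t • v) v 0 := by
      simpa using (hasDerivAt_id (0 : ℂ)).smul_const v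
    have h2 : HasFDerivAt f (fderiv ℂ f 0) ((0 : ℂ) • v) := by
      simpa using hdf.hasFDerivAt
    exact h2.comp_hasDerivAt 0 h1
  have hle : ‖deriv (fun t : ℂ => f (t • v)) 0‖ ≤ 1 / 1 := by
    refine Complex.norm_deriv_le_div_of_mapsTo_ball hd ?_ one_pos
    simpa [hf0] using hmaps.mono_right Metric.ball_subset_closedBall
  rw [hderiv.deriv, div_one] at hle
  rw [hsum]
  exact pow_le_one₀ (norm_nonneg _) hle
end

section
/- The function g̃ : 𝔻² → ℂ defined by g̃(z₁, z₂) = ( (1/2)z₁ + (1/2)z₂ − z₁z₂ ) / ( 1 − (1/2)z₁ − (1/2)z₂ ) is a holomorphic function mapping 𝔻² into 𝔻; it satisfies g̃(0) = 0, g̃'_{z₁}(0) = 1/2, g̃'_{z₂}(0) = 1/2, and hence |g̃'_{z₁}(0)| + |g̃'_{z₂}(0)| = 1, yet g̃ is not a linear function (its power series expansion at 0 contains nonzero higher-order terms). -/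
/-!
Write `g̃ = N / D`. Then `D - N = (1 - z₁)(1 - z₂)` and `D + N = 1 - z₁z₂`, so the Cayley transform
of `g̃` is the average of those of the coordinates:
`(1 + g̃)/(1 - g̃) = ½ ((1 + z₁)/(1 - z₁) + (1 + z₂)/(1 - z₂))`.
Its real part is positive on the bidisk, hence `|g̃| < 1`. Cleared of denominators this is the
identity `normSq_denom_sub_normSq_num`. The partial derivatives at `0`, as well as the failure of
linearity, are read off from the restriction of `g̃` to a coordinate axis, `t ↦ (t/2)/(1 - t/2)`.
-/

/-- The function `g̃(z₁,z₂) = ((1/2)z₁ + (1/2)z₂ - z₁z₂)/(1 - (1/2)z₁ - (1/2)z₂)`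
from Remark 3. -/
noncomputable def gTilde (z : EuclideanSpace ℂ (Fin 2)) : ℂ :=
  ((1 / 2) * z 0 + (1 / 2) * z 1 - z 0 * z 1) / (1 - (1 / 2) * z 0 - (1 / 2) * z 1)

/-- Real part of the Cayley transform of `g̃`, multiplied by `|D - N|²`. -/
lemma normSq_denom_sub_normSq_num (z w : ℂ) :
    Complex.normSq (1 - (1 / 2) * z - (1 / 2) * w) -
        Complex.normSq ((1 / 2) * z + (1 / 2) * w - z * w) =
      (1 / 2) * ((1 - Complex.normSq z) * Complex.normSq (1 - w) +
        (1 - Complex.normSq w) * Complex.normSq (1 - z)) := by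
  simp [Complex.normSq_apply]
  ring

lemma gTilde_denom_ne_zero {z w : ℂ} (hz : ‖z‖ < 1) (hw : ‖w‖ < 1) :
    1 - (1 / 2) * z - (1 / 2) * w ≠ 0 := by
  intro h
  have h1 := Complex.re_le_norm z
  have h2 := Complex.re_le_norm w
  have h3 := congrArg Complex.re h
  simp at h3
  linarith

lemma norm_gTilde_lt_one {z : EuclideanSpace ℂ (Fin 2)} (hz : ∀ j, ‖z j‖ < 1) :
    ‖gTilde z‖ < 1 := by
  have hD := gTilde_denom_ne_zero (hz 0) (hz 1)
  have key := normSq_denom_sub_normSq_num (z 0) (z 1)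
  have hsq (j : Fin 2) : Complex.normSq (z j) < 1 := by
    rw [Complex.normSq_eq_norm_sq]
    exact pow_lt_one₀ (norm_nonneg _) (hz j) two_ne_zero
  have hpos (j : Fin 2) : 0 < Complex.normSq (1 - z j) := by
    refine Complex.normSq_pos.2 (sub_ne_zero.2 fun h => ?_)
    have := hz j
    rw [← h, norm_one] at this
    exact lt_irrefl _ this
  have h0 := mul_pos (sub_pos.2 (hsq 0)) (hpos 1)
  have h1 := mul_pos (sub_pos.2 (hsq 1)) (hpos 0)
  rw [gTilde, norm_div, div_lt_one (norm_pos_iff.2 hD)]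
  refine lt_of_pow_lt_pow_left₀ 2 (norm_nonneg _) ?_
  rw [← Complex.normSq_eq_norm_sq, ← Complex.normSq_eq_norm_sq]
  linarith

lemma differentiableAt_gTilde {z : EuclideanSpace ℂ (Fin 2)} (hz : ∀ j, ‖z j‖ < 1) :
    DifferentiableAt ℂ gTilde z := by
  have hD := gTilde_denom_ne_zero (hz 0) (hz 1)
  unfold gTilde
  fun_prop (disch := exact hD)

lemma gTilde_smul_single (j : Fin 2) (t : ℂ) :
    gTilde (t • EuclideanSpace.single j 1) = ((1 / 2) * t) / (1 - (1 / 2) * t) := by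
  fin_cases j <;> simp [gTilde]

lemma fderiv_gTilde_zero_single (j : Fin 2) :
    fderiv ℂ gTilde 0 (EuclideanSpace.single j 1) = 1 / 2 := by
  have hg : DifferentiableAt ℂ gTilde 0 := differentiableAt_gTilde (by simp)
  rw [← hg.lineDeriv_eq_fderiv, lineDeriv]
  simp only [zero_add, gTilde_smul_single]
  have h : HasDerivAt (fun t : ℂ => (1 / 2) * t) (1 / 2) 0 := by
    simpa using (hasDerivAt_id (0 : ℂ)).const_mul (1 / 2 : ℂ)
  have := (h.fun_div (h.const_sub 1) (by simp)).deriv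
  simpa using this

/-- **Remark 3.** The function `g̃` is holomorphic on the bidisk with values in `𝔻`,
satisfies `g̃(0) = 0`, `g̃'_{z₁}(0) = g̃'_{z₂}(0) = 1/2`, hence
`|g̃'_{z₁}(0)| + |g̃'_{z₂}(0)| = 1`, yet `g̃` is not a linear function: equality in the
Schwarz–Pick inequality at a point does not determine the higher-order terms. -/
theorem gTilde_extremal_not_linear :
    DifferentiableOn ℂ gTilde {z : EuclideanSpace ℂ (Fin 2) | ∀ j, ‖z j‖ < 1} ∧
    (∀ z : EuclideanSpace ℂ (Fin 2), (∀ j, ‖z j‖ < 1) → ‖gTilde z‖ < 1) ∧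
    gTilde 0 = 0 ∧
    fderiv ℂ gTilde 0 (EuclideanSpace.single 0 1) = 1 / 2 ∧
    fderiv ℂ gTilde 0 (EuclideanSpace.single 1 1) = 1 / 2 ∧
    ‖fderiv ℂ gTilde 0 (EuclideanSpace.single 0 1)‖ +
        ‖fderiv ℂ gTilde 0 (EuclideanSpace.single 1 1)‖ = 1 ∧
    ¬ ∃ a b : ℂ, ∀ z : EuclideanSpace ℂ (Fin 2), (∀ j, ‖z j‖ < 1) →
        gTilde z = a * z 0 + b * z 1 := by
  refine ⟨fun z hz => (differentiableAt_gTilde hz).differentiableWithinAt,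
    fun z hz => norm_gTilde_lt_one hz, by simp [gTilde], fderiv_gTilde_zero_single 0,
    fderiv_gTilde_zero_single 1, ?_, ?_⟩
  · rw [fderiv_gTilde_zero_single, fderiv_gTilde_zero_single]
    norm_num
  · rintro ⟨a, b, h⟩
    -- On the first axis `g̃(1/2) = 1/3` and `g̃(-1/2) = -1/5`, so `g̃` is not odd there.
    have mem (t : ℂ) (ht : ‖t‖ < 1) :
        ∀ j, ‖(t • EuclideanSpace.single (0 : Fin 2) (1 : ℂ)) j‖ < 1 := by
      intro j
      fin_cases j <;> simp [ht]
    have h1 := h _ (mem (1 / 2) (by norm_num))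
    have h2 := h _ (mem (-(1 / 2)) (by norm_num))
    rw [gTilde_smul_single] at h1 h2
    simp at h1 h2
    have h3 := congrArg₂ (· + ·) h1 h2
    norm_num at h3
end

section
/- Let f : 𝔻 → 𝔹_m be a holomorphic mapping. Then for every z ∈ 𝔻, the gradient of the modulus satisfies |∇|f|(z)| ≤ (1 − |f(z)|²)/(1 − |z|²); explicitly, if f(z) ≠ 0 then |⟨f'(z), f(z)⟩|/|f(z)| ≤ (1 − |f(z)|²)/(1 − |z|²), and if f(z) = 0 then |f'(z)| ≤ (1 − |f(z)|²)/(1 − |z|²) = 1/(1 − |z|²). -/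
open scoped InnerProductSpace

/-!
The vector-valued estimate reduces to the classical scalar Schwarz–Pick lemma: for a unit vector
`e`, the function `w ↦ ⟪e, f w⟫` maps the disk to itself. If `f z ≠ 0`, take `e = f z / ‖f z‖`, so
that `|⟪e, f z⟫| = ‖f z‖` and `|⟪e, f' z⟫| = |⟪f' z, f z⟫| / ‖f z‖`. If `f z = 0`, take
`e = f' z / ‖f' z‖`.

The scalar lemma (`norm_deriv_le_schwarzPick`) follows from the Schwarz lemma at the origin, applied
to the composition of the function with the disk automorphisms that move `0` to `z` and `g z` to
`0`.
-/

/-- The disk automorphism `w ↦ (w - a) / (1 - conj a * w)`, sending `a` to `0`; its inverse is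
`diskMoebius (-a)`. -/
noncomputable def diskMoebius (a w : ℂ) : ℂ := (w - a) / (1 - (starRingEnd ℂ) a * w)

lemma one_sub_conj_mul_ne_zero {a w : ℂ} (ha : ‖a‖ < 1) (hw : ‖w‖ < 1) :
    1 - (starRingEnd ℂ) a * w ≠ 0 := by
  intro h
  have h1 : (starRingEnd ℂ) a * w = 1 := (sub_eq_zero.mp h).symm
  have h2 : ‖a‖ * ‖w‖ = 1 := by
    simpa using congrArg norm h1
  nlinarith [norm_nonneg a, norm_nonneg w]

lemma norm_diskMoebius_lt_one {a w : ℂ} (ha : ‖a‖ < 1) (hw : ‖w‖ < 1) :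
    ‖diskMoebius a w‖ < 1 := by
  rw [diskMoebius, norm_div,
    div_lt_one (norm_pos_iff.mpr (one_sub_conj_mul_ne_zero ha hw))]
  refine lt_of_pow_lt_pow_left₀ 2 (norm_nonneg _) ?_
  have ha2 : ‖a‖ ^ 2 < 1 := pow_lt_one₀ (norm_nonneg a) ha two_ne_zero
  have hw2 : ‖w‖ ^ 2 < 1 := pow_lt_one₀ (norm_nonneg w) hw two_ne_zero
  -- `|1 - conj a * w|² - |w - a|² = (1 - |a|²) (1 - |w|²)`
  have key : 0 < (1 - ‖a‖ ^ 2) * (1 - ‖w‖ ^ 2) :=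
    mul_pos (sub_pos.mpr ha2) (sub_pos.mpr hw2)
  simp only [Complex.sq_norm, Complex.normSq_apply, Complex.sub_re, Complex.sub_im,
    Complex.mul_re, Complex.mul_im, Complex.conj_re, Complex.conj_im, Complex.one_re,
    Complex.one_im] at key ⊢
  nlinarith [key]

lemma hasDerivAt_diskMoebius {a w : ℂ} (ha : ‖a‖ < 1) (hw : ‖w‖ < 1) :
    HasDerivAt (diskMoebius a)
      ((1 - (‖a‖ : ℂ) ^ 2) / (1 - (starRingEnd ℂ) a * w) ^ 2) w := by
  have h := ((hasDerivAt_id w).sub_const a).div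
    (((hasDerivAt_id w).const_mul ((starRingEnd ℂ) a)).const_sub 1)
    (one_sub_conj_mul_ne_zero ha hw)
  refine h.congr_deriv ?_
  rw [← Complex.conj_mul']
  simp only [id]
  congr 1
  ring

/-- The scalar Schwarz–Pick lemma in its infinitesimal form. -/
lemma norm_deriv_le_schwarzPick {g : ℂ → ℂ} {g' z : ℂ}
    (hg : DifferentiableOn ℂ g (Metric.ball 0 1))
    (hgb : ∀ w ∈ Metric.ball (0 : ℂ) 1, ‖g w‖ < 1) (hz : ‖z‖ < 1) (hg' : HasDerivAt g g' z) :
    ‖g'‖ ≤ (1 - ‖g z‖ ^ 2) / (1 - ‖z‖ ^ 2) := by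
  have hgz : ‖g z‖ < 1 := hgb z (by simpa using hz)
  have hnz : ‖-z‖ < 1 := by simpa using hz
  have hψ0 : diskMoebius (-z) 0 = z := by simp [diskMoebius]
  have hφ : diskMoebius (g z) (g z) = 0 := by simp [diskMoebius]
  have hmaps : ∀ w ∈ Metric.ball (0 : ℂ) 1, diskMoebius (-z) w ∈ Metric.ball (0 : ℂ) 1 := by
    intro w hw
    simpa using norm_diskMoebius_lt_one hnz (by simpa using hw)
  have hdψ := hasDerivAt_diskMoebius hnz (w := 0) (by simp)
  have hdφ := hasDerivAt_diskMoebius hgz hgz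
  have hd : HasDerivAt (fun w => diskMoebius (g z) (g (diskMoebius (-z) w)))
      ((1 - (‖g z‖ : ℂ) ^ 2) / (1 - (starRingEnd ℂ) (g z) * g z) ^ 2 *
        (g' * ((1 - (‖-z‖ : ℂ) ^ 2) / (1 - (starRingEnd ℂ) (-z) * 0) ^ 2))) 0 := by
    refine HasDerivAt.comp (h₂ := diskMoebius (g z)) 0 ?_
      (HasDerivAt.comp (h₂ := g) 0 ?_ hdψ)
    · simpa only [hψ0] using hdφ
    · simpa only [hψ0] using hg'
  have hle : ‖deriv (fun w => diskMoebius (g z) (g (diskMoebius (-z) w))) 0‖ ≤ 1 := by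
    refine Complex.norm_deriv_le_one_of_mapsTo_ball (R := 1) ?_ ?_ one_pos
    · intro w hw
      have hw' : ‖w‖ < 1 := by simpa using hw
      have h1 := (hasDerivAt_diskMoebius hnz hw').differentiableAt
      have h2 := (hg _ (hmaps w hw)).differentiableAt (Metric.isOpen_ball.mem_nhds (hmaps w hw))
      have h3 := (hasDerivAt_diskMoebius hgz (hgb _ (hmaps w hw))).differentiableAt
      exact (h3.comp w (h2.comp w h1)).differentiableWithinAt
    · intro w hw
      simpa [hψ0, hφ] using (norm_diskMoebius_lt_one hgz (hgb _ (hmaps w hw))).le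
  have hA : 0 < 1 - ‖g z‖ ^ 2 := sub_pos.mpr (pow_lt_one₀ (norm_nonneg _) hgz two_ne_zero)
  have hB : 0 < 1 - ‖z‖ ^ 2 := sub_pos.mpr (pow_lt_one₀ (norm_nonneg _) hz two_ne_zero)
  have nA : ‖(1 - (‖g z‖ : ℂ) ^ 2)‖ = 1 - ‖g z‖ ^ 2 := by
    rw [← Complex.norm_of_nonneg hA.le]; push_cast; rfl
  have nB : ‖(1 - (‖z‖ : ℂ) ^ 2)‖ = 1 - ‖z‖ ^ 2 := by
    rw [← Complex.norm_of_nonneg hB.le]; push_cast; rfl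
  rw [hd.deriv, Complex.conj_mul', norm_neg] at hle
  simp only [mul_zero, sub_zero, one_pow, div_one, norm_mul, norm_div, norm_pow, nA, nB] at hle
  rw [le_div_iff₀ hB]
  have : (1 - ‖g z‖ ^ 2) / (1 - ‖g z‖ ^ 2) ^ 2 * (‖g'‖ * (1 - ‖z‖ ^ 2))
      = ‖g'‖ * (1 - ‖z‖ ^ 2) / (1 - ‖g z‖ ^ 2) := by
    field_simp
  rw [this, div_le_one hA] at hle
  exact hle

/-- The Schwarz–Pick estimate for the component of `f` along a unit vector `e`. -/
lemma norm_inner_deriv_le {m : ℕ} {f : ℂ → EuclideanSpace ℂ (Fin m)}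
    (hf : DifferentiableOn ℂ f (Metric.ball (0 : ℂ) 1))
    (hfb : ∀ z ∈ Metric.ball (0 : ℂ) 1, ‖f z‖ < 1)
    {z : ℂ} (hz : z ∈ Metric.ball (0 : ℂ) 1) {e : EuclideanSpace ℂ (Fin m)} (he : ‖e‖ = 1) :
    ‖⟪e, deriv f z⟫_ℂ‖ ≤ (1 - ‖⟪e, f z⟫_ℂ‖ ^ 2) / (1 - ‖z‖ ^ 2) := by
  have hd := (hf z hz).differentiableAt (Metric.isOpen_ball.mem_nhds hz)
  refine norm_deriv_le_schwarzPick (g := fun w => ⟪e, f w⟫_ℂ)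
    ((innerSL ℂ e).differentiable.comp_differentiableOn hf) ?_ (by simpa using hz)
    ((innerSL ℂ e).hasFDerivAt.comp_hasDerivAt z hd.hasDerivAt)
  intro w hw
  calc ‖⟪e, f w⟫_ℂ‖ ≤ ‖e‖ * ‖f w‖ := norm_inner_le_norm _ _
    _ < 1 := by rw [he, one_mul]; exact hfb w hw

/-- **Pavlović's Schwarz–Pick lemma (inequality (1.4)/(1.5), `n = 1` case).**
If `f : 𝔻 → 𝔹_m` is holomorphic, then `|∇|f|(z)| ≤ (1 - |f z|²)/(1 - |z|²)` for all
`z ∈ 𝔻`: if `f z ≠ 0` then `|⟨f'(z), f z⟩|/|f z| ≤ (1 - |f z|²)/(1 - |z|²)`, and if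
`f z = 0` then `|f'(z)| ≤ (1 - |f z|²)/(1 - |z|²) = 1/(1 - |z|²)`. -/
theorem schwarz_pick_disk_to_ball
    (m : ℕ) (f : ℂ → EuclideanSpace ℂ (Fin m))
    (hf : DifferentiableOn ℂ f (Metric.ball (0 : ℂ) 1))
    (hfb : ∀ z ∈ Metric.ball (0 : ℂ) 1, ‖f z‖ < 1)
    (z : ℂ) (hz : z ∈ Metric.ball (0 : ℂ) 1) :
    (f z ≠ 0 →
      ‖⟪deriv f z, f z⟫_ℂ‖ / ‖f z‖ ≤ (1 - ‖f z‖ ^ 2) / (1 - ‖z‖ ^ 2)) ∧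
    (f z = 0 →
      ‖deriv f z‖ ≤ (1 - ‖f z‖ ^ 2) / (1 - ‖z‖ ^ 2) ∧
      (1 - ‖f z‖ ^ 2) / (1 - ‖z‖ ^ 2) = 1 / (1 - ‖z‖ ^ 2)) := by
  have unit : ∀ v : EuclideanSpace ℂ (Fin m), v ≠ 0 → ‖((‖v‖ : ℂ)⁻¹) • v‖ = 1 := by
    intro v hv
    rw [norm_smul, norm_inv, Complex.norm_real, norm_norm,
      inv_mul_cancel₀ (norm_ne_zero_iff.mpr hv)]
  have inner_self : ∀ v : EuclideanSpace ℂ (Fin m), v ≠ 0 →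
      ‖⟪((‖v‖ : ℂ)⁻¹) • v, v⟫_ℂ‖ = ‖v‖ := by
    intro v hv
    have hv' := norm_ne_zero_iff.mpr hv
    rw [inner_smul_left, inner_self_eq_norm_sq_to_K, norm_mul, RCLike.norm_conj, norm_inv]
    simp only [norm_pow, Complex.coe_algebraMap, Complex.norm_real, norm_norm]
    field_simp
  refine ⟨fun h0 => ?_, fun h0 => ⟨?_, by simp [h0]⟩⟩
  · have h := norm_inner_deriv_le hf hfb hz (unit _ h0)
    rw [inner_self _ h0, inner_smul_left, norm_mul, RCLike.norm_conj, norm_inv,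
      Complex.norm_real, norm_norm, norm_inner_symm, inv_mul_eq_div] at h
    exact h
  · by_cases hd : deriv f z = 0
    · have hB : ‖z‖ ^ 2 < 1 := pow_lt_one₀ (norm_nonneg _) (by simpa using hz) two_ne_zero
      rw [hd, h0, norm_zero]
      exact div_nonneg (by norm_num) (sub_pos.mpr hB).le
    · have h := norm_inner_deriv_le hf hfb hz (unit _ hd)
      rw [inner_self _ hd, h0, inner_zero_right] at h
      rw [h0]
      simpa using h
end
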